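/- Let N ≥ 3, let a₁, …, a_N > 0 and b₁, …, b_N ∈ ℝ, let h(p) be the periodic N×N Hermitian matrix with corner phases, and let Δ(x) = det(h(π/2) − xI), a real polynomial of degree N in x with leading coefficient (−1)^N. Then h(π/2) has N distinct real eigenvalues λ₁ < λ₂ < ⋯ < λ_N, one has (−1)^j·Δ'(λ_j) > 0 for every j = 1, …, N, and the derivative Δ' has exactly N−1 real roots μ₁ < μ₂ < ⋯ < μ_{N−1}, which satisfy λ_j < μ_j < λ_{j+1} for j = 1, …, N−1. -/

import Mathlib

open Matrix Complex Polynomial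

/-- The periodic `N×N` Hermitian matrix with corner phases. -/
noncomputable def hper (N : ℕ) (a b : ℕ → ℝ) (p : ℝ) : Matrix (Fin N) (Fin N) ℂ :=
  Matrix.of fun i j =>
    if (i : ℕ) = (j : ℕ) then (b i : ℂ)
    else if (i : ℕ) + 1 = (j : ℕ) then (a i : ℂ)
    else if (j : ℕ) + 1 = (i : ℕ) then (a j : ℂ)
    else if (i : ℕ) = 0 ∧ (j : ℕ) + 1 = N then
      (a (N - 1) : ℂ) * Complex.exp ((p : ℂ) * Complex.I)
    else if (j : ℕ) = 0 ∧ (i : ℕ) + 1 = N then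
      (a (N - 1) : ℂ) * Complex.exp (-((p : ℂ) * Complex.I))
    else 0

/-- `Δ(x) = det(h(π/2) - xI)`, a real-valued function of `x ∈ ℝ` (the determinant
is real since `h(π/2)` is Hermitian). -/
noncomputable def DeltaHalf (N : ℕ) (a b : ℕ → ℝ) : ℝ → ℝ :=
  fun x =>
    ((hper N a b (Real.pi / 2)
        - (x : ℂ) • (1 : Matrix (Fin N) (Fin N) ℂ)).det).re

open Finset in
theorem aux_main (N : ℕ) (hN : 3 ≤ N) (lam : Fin N → ℝ) (hl : StrictMono lam)
    (q1 : ∀ j : Fin (N - 1), j.val < N) (q2 : ∀ j : Fin (N - 1), j.val + 1 < N) (D : ℝ → ℝ)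
    (hD : ∀ x, D x = ∏ j, (lam j - x)) :
    (∀ j : Fin N, 0 < (-1 : ℝ) ^ ((j : ℕ) + 1) * deriv D (lam j)) ∧
      ∃ mu : Fin (N - 1) → ℝ, StrictMono mu ∧
        (∀ x : ℝ, deriv D x = 0 ↔ ∃ j : Fin (N - 1), x = mu j) ∧
        ∀ j : Fin (N - 1),
          lam ⟨j.val, q1 j⟩ < mu j ∧
          mu j < lam ⟨j.val + 1, q2 j⟩ := by
  classical
  set P : ℝ[X] := ∏ j, (C (lam j) - X) with hP
  have hDP : D = fun x => P.eval x := by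
    funext x; simp [hD, hP, eval_prod]
  have hder : ∀ x, deriv D x = P.derivative.eval x := by
    intro x; rw [hDP]; exact P.deriv
  have hval : ∀ j, P.derivative.eval (lam j) = - ∏ i ∈ univ.erase j, (lam i - lam j) := by
    intro j
    have : P = (C (lam j) - X) * ∏ i ∈ univ.erase j, (C (lam i) - X) := by
      exact (mul_prod_erase univ (fun i => (C (lam i) - X : ℝ[X])) (mem_univ j)).symm
    rw [this]
    simp [derivative_mul, eval_prod]
  have hsign : ∀ j : Fin N, 0 < (-1 : ℝ) ^ ((j : ℕ) + 1) * deriv D (lam j) := by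
    intro j
    rw [hder, hval]
    have h1 : univ.erase j = Iio j ∪ Ioi j := by
      ext i; simp
    have h2 : Disjoint (Iio j) (Ioi j) := by
      rw [Finset.disjoint_left]; intro i; simp; intro h; exact h.le
    rw [h1, prod_union h2]
    have h3 : ∏ i ∈ Iio j, (lam i - lam j) = (-1) ^ (j:ℕ) * ∏ i ∈ Iio j, (lam j - lam i) := by
      have : ∀ i ∈ Iio j, lam i - lam j = (-1) * (lam j - lam i) := by intros; ring
      rw [prod_congr rfl this, prod_mul_distrib]; simp
    have h4 : 0 < ∏ i ∈ Iio j, (lam j - lam i) :=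
      prod_pos fun i hi => sub_pos.2 (hl (by simpa using hi))
    have h5 : 0 < ∏ i ∈ Ioi j, (lam i - lam j) :=
      prod_pos fun i hi => sub_pos.2 (hl (by simpa using hi))
    rw [h3]
    have h6 : ((-1:ℝ) ^ (j:ℕ)) * (-1) ^ (j:ℕ) = 1 := by
      rw [← mul_pow]; simp
    have := mul_pos h4 h5
    calc (0:ℝ) < _ := this
      _ = (((-1:ℝ) ^ (j:ℕ)) * (-1) ^ (j:ℕ)) * ((∏ i ∈ Iio j, (lam j - lam i)) *
          ∏ i ∈ Ioi j, (lam i - lam j)) := by rw [h6, one_mul]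
      _ = _ := by ring
  refine ⟨hsign, ?_⟩
  have hD0 : ∀ j, D (lam j) = 0 := fun j => by
    rw [hD]; exact prod_eq_zero (mem_univ j) (sub_self _)
  have hex : ∀ j : Fin (N - 1), ∃ m, (lam ⟨j.val, q1 j⟩ < m ∧
      m < lam ⟨j.val + 1, q2 j⟩) ∧ deriv D m = 0 := by
    intro j
    have := exists_deriv_eq_zero (f := D) (a := lam ⟨j.val, q1 j⟩)
      (b := lam ⟨j.val + 1, q2 j⟩) (hl (by simp [Fin.lt_def]))
      (by rw [hDP]; exact P.continuous.continuousOn) (by rw [hD0, hD0])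
    obtain ⟨m, hm, h⟩ := this
    exact ⟨m, hm, h⟩
  choose mu hmu hmu0 using hex
  have hmono : StrictMono mu := by
    intro i j hij
    refine (hmu i).2.trans_le (le_trans (hl.monotone ?_) (hmu j).1.le)
    simp only [Fin.le_def]; exact hij
  refine ⟨mu, hmono, ?_, hmu⟩
  have hne : P.derivative ≠ 0 := by
    intro h
    have := hsign ⟨0, by omega⟩
    rw [hder, h] at this
    simp at this
  have hdeg : P.derivative.natDegree ≤ N - 1 := by
    refine (natDegree_derivative_le P).trans (Nat.sub_le_sub_right ?_ 1)
    refine (natDegree_prod_le _ _).trans ?_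
    refine (sum_le_card_nsmul _ _ 1 ?_).trans (by simp)
    intro i _
    exact (natDegree_sub_le _ _).trans (by simp)
  have hsub : univ.image mu ⊆ P.derivative.roots.toFinset := by
    intro x hx
    obtain ⟨j, -, rfl⟩ := mem_image.1 hx
    rw [Multiset.mem_toFinset, mem_roots hne, IsRoot, ← hder]
    exact hmu0 j
  have heq := eq_of_subset_of_card_le hsub (by
    rw [card_image_of_injective _ hmono.injective, card_univ, Fintype.card_fin]
    exact (Multiset.toFinset_card_le _).trans ((card_roots' _).trans hdeg))
  intro x
  rw [hder]
  have : P.derivative.eval x = 0 ↔ x ∈ P.derivative.roots.toFinset := by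
    rw [Multiset.mem_toFinset, mem_roots hne, IsRoot]
  rw [this, ← heq]
  simp [eq_comm]

theorem row_mid (N : ℕ) (a b : ℕ → ℝ) (p : ℝ) (v : Fin N → ℂ) (k : ℕ) (hk : k + 2 < N) :
    (hper N a b p *ᵥ v) ⟨k + 1, by omega⟩ = a k * v ⟨k, by omega⟩ + b (k + 1) * v ⟨k + 1, by omega⟩
      + a (k + 1) * v ⟨k + 2, hk⟩ := by
  simp only [Matrix.mulVec, dotProduct]
  rw [← Finset.sum_subset (Finset.subset_univ
    {⟨k, by omega⟩, ⟨k + 1, by omega⟩, ⟨k + 2, hk⟩})]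
  · rw [Finset.sum_insert (by simp), Finset.sum_insert (by simp), Finset.sum_singleton]
    have hh : ¬ (k + 1 + 1 = k) := by omega
    simp [hper, hh]
    ring
  · intro x _ hx
    simp [Fin.ext_iff] at hx
    have : hper N a b p ⟨k + 1, by omega⟩ x = 0 := by
      simp only [hper, Matrix.of_apply]
      repeat rw [if_neg (by omega)]
    rw [this, zero_mul]

theorem row_zero (N : ℕ) (hN : 3 ≤ N) (a b : ℕ → ℝ) (p : ℝ) (v : Fin N → ℂ) :
    (hper N a b p *ᵥ v) ⟨0, by omega⟩ = b 0 * v ⟨0, by omega⟩ + a 0 * v ⟨1, by omega⟩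
      + a (N - 1) * Complex.exp (p * Complex.I) * v ⟨N - 1, by omega⟩ := by
  simp only [Matrix.mulVec, dotProduct]
  rw [← Finset.sum_subset (Finset.subset_univ
    {⟨0, by omega⟩, ⟨1, by omega⟩, ⟨N - 1, by omega⟩})]
  · rw [Finset.sum_insert (by simp; omega), Finset.sum_insert (by simp; omega),
      Finset.sum_singleton]
    have : hper N a b p ⟨0, by omega⟩ ⟨N - 1, by omega⟩ = a (N - 1) * Complex.exp (p * Complex.I) := by
      simp only [hper, Matrix.of_apply]
      rw [if_neg (by omega), if_neg (by omega), if_neg (by omega)]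
      rw [if_pos ⟨trivial, by omega⟩]
    rw [this]
    simp [hper]
    ring
  · intro x _ hx
    simp [Fin.ext_iff] at hx
    have : hper N a b p ⟨0, by omega⟩ x = 0 := by
      simp only [hper, Matrix.of_apply]
      repeat rw [if_neg (by omega)]
    rw [this, zero_mul]

theorem eig_zero (N : ℕ) (hN : 3 ≤ N) (a b : ℕ → ℝ) (ha : ∀ k < N, 0 < a k) (t : ℝ)
    (v : Fin N → ℂ) (hv : hper N a b (Real.pi / 2) *ᵥ v = (t : ℂ) • v)
    (h0 : v ⟨0, by omega⟩ = 0) : v = 0 := by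
  have key : ∀ k (hk : k + 1 < N), (∃ r : ℝ, v ⟨k, by omega⟩ = r * v ⟨1, by omega⟩) ∧
      ∃ r : ℝ, v ⟨k + 1, hk⟩ = r * v ⟨1, by omega⟩ := by
    intro k
    induction k with
    | zero => intro hk; exact ⟨⟨0, by simp [h0]⟩, ⟨1, by simp⟩⟩
    | succ k ih =>
      intro hk
      obtain ⟨⟨r, hr⟩, ⟨s, hs⟩⟩ := ih (by omega)
      refine ⟨⟨s, hs⟩, ⟨(t * s - a k * r - b (k + 1) * s) / a (k + 1), ?_⟩⟩
      have h := congrFun hv ⟨k + 1, by omega⟩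
      rw [row_mid N a b _ v k hk, Pi.smul_apply, smul_eq_mul, hr, hs] at h
      have hne : (a (k + 1) : ℂ) ≠ 0 := by
        exact_mod_cast (ha (k + 1) (by omega)).ne'
      push_cast
      field_simp
      linear_combination h
  have h1 : v ⟨1, by omega⟩ = 0 := by
    obtain ⟨r, hr⟩ := (key (N - 2) (by omega)).2
    have hr' : v ⟨N - 1, by omega⟩ = r * v ⟨1, by omega⟩ := by
      rw [← hr]; congr 2; omega
    have h := congrFun hv ⟨0, by omega⟩
    have he : Complex.exp (((Real.pi / 2 : ℝ) : ℂ) * Complex.I) = Complex.I := by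
      push_cast; exact Complex.exp_pi_div_two_mul_I
    rw [row_zero N hN, he, Pi.smul_apply, smul_eq_mul, h0, hr'] at h
    have h' : ((a 0 : ℂ) + a (N - 1) * Complex.I * r) * v ⟨1, by omega⟩ = 0 := by
      linear_combination h
    rcases mul_eq_zero.1 h' with h' | h'
    · have := congrArg Complex.re h'
      simp at this
      exact absurd this (ha 0 (by omega)).ne'
    · exact h'
  funext k
  obtain ⟨k, hk⟩ := k
  rcases Nat.eq_zero_or_pos k with rfl | hp
  · exact h0
  · obtain ⟨k, rfl⟩ : ∃ m, k = m + 1 := ⟨k - 1, by omega⟩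
    obtain ⟨r, hr⟩ := (key k hk).2
    rw [hr, h1]; simp

theorem hper_herm (N : ℕ) (hN : 3 ≤ N) (a b : ℕ → ℝ) (p : ℝ) : (hper N a b p).IsHermitian := by
  ext i j
  simp only [Matrix.conjTranspose_apply, hper, Matrix.of_apply]
  have hc : star (Complex.exp ((p : ℂ) * Complex.I)) = Complex.exp (-((p : ℂ) * Complex.I)) := by
    rw [Complex.star_def, ← Complex.exp_conj]; simp
  have hc' : star (Complex.exp (-((p : ℂ) * Complex.I))) = Complex.exp ((p : ℂ) * Complex.I) := by
    rw [← hc, star_star]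
  have hr : ∀ x : ℝ, star (x : ℂ) = x := fun x => Complex.conj_ofReal x
  have hi := i.isLt
  have hj := j.isLt
  split_ifs <;> first | omega | (simp only [star_mul', hr, hc, hc', star_zero]; done) | (simp only [hr]; congr 2)

/-- `h(π/2)` has `N` distinct real eigenvalues
`λ₁ < ⋯ < λ_N`, `(-1)^j Δ'(λ_j) > 0` for all `j`, and `Δ'` has exactly `N-1`
real roots `μ₁ < ⋯ < μ_{N-1}`, which satisfy `λ_j < μ_j < λ_{j+1}`. -/
theorem hper_half_pi_eigenvalues (N : ℕ) (hN : 3 ≤ N) (a b : ℕ → ℝ)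
    (ha : ∀ k < N, 0 < a k) :
    ∃ lam : Fin N → ℝ, StrictMono lam ∧
      (hper N a b (Real.pi / 2)).charpoly
        = ∏ j : Fin N, (X - C ((lam j : ℝ) : ℂ)) ∧
      (∀ j : Fin N,
        0 < (-1 : ℝ) ^ ((j : ℕ) + 1) * deriv (DeltaHalf N a b) (lam j)) ∧
      ∃ mu : Fin (N - 1) → ℝ, StrictMono mu ∧
        (∀ x : ℝ, deriv (DeltaHalf N a b) x = 0 ↔ ∃ j : Fin (N - 1), x = mu j) ∧
        ∀ j : Fin (N - 1),
          lam ⟨j.val, by have := j.isLt; omega⟩ < mu j ∧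
          mu j < lam ⟨j.val + 1, by have := j.isLt; omega⟩ := by
  classical
  have hH := hper_herm N hN a b (Real.pi / 2)
  have hinj : Function.Injective hH.eigenvalues := by
    intro i j hij
    by_contra hne
    have ei := hH.mulVec_eigenvectorBasis i
    have ej := hH.mulVec_eigenvectorBasis j
    rw [← hij] at ej
    set u : Fin N → ℂ := ⇑(hH.eigenvectorBasis i) with hu
    set w : Fin N → ℂ := ⇑(hH.eigenvectorBasis j) with hw
    set z : Fin N := ⟨0, by omega⟩
    have hz : w z • u - u z • w = 0 := by
      refine eig_zero N hN a b ha (hH.eigenvalues i) _ ?_ ?_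
      · rw [Matrix.mulVec_sub, Matrix.mulVec_smul, Matrix.mulVec_smul, ei, ej]
        ext k
        simp
        ring
      · simp [z]; ring
    have hz2 : w z • hH.eigenvectorBasis i - u z • hH.eigenvectorBasis j = 0 := by
      ext k; exact congrFun hz k
    have hwz : w z = 0 := by
      have := congrArg (fun y => inner ℂ (hH.eigenvectorBasis i) y) hz2
      simpa [inner_sub_right, inner_smul_right, orthonormal_iff_ite.1 hH.eigenvectorBasis.orthonormal, hne] using this
    have : w = 0 := eig_zero N hN a b ha (hH.eigenvalues i) _ (by rw [ej]; ext k; simp) hwz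
    have h2 : hH.eigenvectorBasis j = 0 := by
      ext k; exact congrFun this k
    exact hH.eigenvectorBasis.orthonormal.ne_zero j h2
  set S : Finset ℝ := Finset.univ.image hH.eigenvalues with hS
  have hcard : S.card = N := by
    rw [hS, Finset.card_image_of_injective _ hinj]; simp
  set lam := S.orderEmbOfFin hcard with hlam
  have hchar : (hper N a b (Real.pi / 2)).charpoly = ∏ j : Fin N, (X - C ((lam j : ℝ) : ℂ)) := by
    rw [hH.charpoly_eq]
    have h1 : ∏ x ∈ S, (X - C ((x : ℝ) : ℂ)) = ∏ i, (X - C ((hH.eigenvalues i : ℝ) : ℂ)) := by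
      rw [hS, Finset.prod_image hinj.injOn]
    have h2 : ∏ x ∈ S, (X - C ((x : ℝ) : ℂ)) = ∏ j : Fin N, (X - C ((lam j : ℝ) : ℂ)) := by
      have : S = Finset.univ.image lam := (Finset.image_orderEmbOfFin_univ S hcard).symm
      conv_lhs => rw [this]
      rw [Finset.prod_image lam.injective.injOn]
    exact h1.symm.trans h2
  refine ⟨lam, lam.strictMono, hchar, ?_⟩
  refine aux_main N hN lam lam.strictMono _ _ _ ?_
  intro x
  have h := congrArg (Polynomial.eval (x : ℂ)) hchar
  rw [Matrix.charpoly, _root_.eval_det, Matrix.matPolyEquiv_charmatrix, eval_prod] at h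
  simp only [eval_sub, eval_X, eval_C] at h
  have h2 : (hper N a b (Real.pi / 2) - (x : ℂ) • (1 : Matrix (Fin N) (Fin N) ℂ)).det
      = ((∏ j, (lam j - x) : ℝ) : ℂ) := by
    rw [← neg_sub, Matrix.det_neg, Matrix.smul_one_eq_diagonal, ← Matrix.scalar_apply, h]
    push_cast
    rw [Fintype.card_fin]
    have : ∀ j ∈ (Finset.univ : Finset (Fin N)), ((lam j : ℂ) - x) = (-1) * (x - lam j) := by
      intros; ring
    rw [Finset.prod_congr rfl this, Finset.prod_mul_distrib]
    simp
  unfold DeltaHalf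
  rw [h2, Complex.ofReal_re]
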